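/- arXiv:1704.03581 — 2 statements merged into one kernel-verified Lean document; each statement's English description precedes it below -/
import Mathlib

section
/- Let V ≥ 2 and let F = (F_1, …, F_V) be a probability vector with F_j > 0 for all j. For each ϖ > 0, let μ_ϖ denote the Poisson Pólya urn law PPU(ϖ, F) and let ν_ϖ denote the Dirichlet law Dir(ϖ, F) (defined via the normalized-Gamma representation), both regarded as probability measures on R^V. Then the Lévy–Prokhorov distance d_LP(μ_ϖ, ν_ϖ) tends to 0 as ϖ → ∞; in particular, the Poisson Pólya urn converges in distribution to the Dirichlet distribution. -/
open MeasureTheory ProbabilityTheory Filter Real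

/-- The Poisson Pólya urn law `PPU(ϖ, F)` on `ℝ^V`: the law of the normalized vector of
independent Poisson counts with means `ϖ * F j`, conditional on the total count being positive. -/
noncomputable def ppu (V : ℕ) (ϖ : ℝ) (F : Fin V → ℝ) : Measure (Fin V → ℝ) :=
  Measure.map (fun γ : Fin V → ℕ => fun i => (γ i : ℝ) / ((∑ j, γ j : ℕ) : ℝ))
    ((Measure.pi fun j => poissonMeasure (ϖ * F j).toNNReal)[|{γ | 0 < ∑ j, γ j}])

/-- The Dirichlet law `Dir(ϖ, F)` on `ℝ^V`, via the normalized-Gamma representation: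
the law of `(γ₁/T, …, γ_V/T)` for independent `γ_j ~ Gamma(ϖ F_j, 1)` and `T = ∑ γ_j`. -/
noncomputable def dirichletLaw (V : ℕ) (ϖ : ℝ) (F : Fin V → ℝ) : Measure (Fin V → ℝ) :=
  Measure.map (fun γ : Fin V → ℝ => fun i => γ i / ∑ j, γ j)
    (Measure.pi fun j => gammaMeasure (ϖ * F j) 1)


lemma poisson_second_moment (r : NNReal) :
    ∫⁻ n : ℕ, ENNReal.ofReal (((n : ℝ) - r) ^ 2) ∂(poissonMeasure r) ≤ ENNReal.ofReal r := by
  have h0 := hasSum_one_poissonMeasure r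
  have h1 : HasSum (fun n : ℕ => Real.exp (-r) * r ^ n / (n.factorial) * (n : ℝ)) r := by
    rw [← hasSum_nat_add_iff' 1]
    simp only [Finset.range_one, Finset.sum_singleton, Nat.cast_zero, mul_zero, sub_zero]
    have := h0.mul_left (r : ℝ)
    rw [mul_one] at this
    refine Eq.mp (congrArg (fun g => HasSum g _) (funext fun n => ?_)) this
    symm
    rw [Nat.factorial_succ]
    push_cast
    have : (n.factorial : ℝ) ≠ 0 := by positivity
    field_simp
    try ring
  have h2 : HasSum (fun n : ℕ => Real.exp (-r) * r ^ n / (n.factorial) * ((n : ℝ) * (n - 1)))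
      ((r : ℝ) * r) := by
    rw [← hasSum_nat_add_iff' 1]
    simp only [Finset.range_one, Finset.sum_singleton, Nat.cast_zero, mul_zero, sub_zero, zero_mul]
    have := h1.mul_left (r : ℝ)
    refine Eq.mp (congrArg (fun g => HasSum g _) (funext fun n => ?_)) this
    symm
    rw [Nat.factorial_succ]
    push_cast
    have : (n.factorial : ℝ) ≠ 0 := by positivity
    field_simp
    ring
  have h3 : HasSum (fun n : ℕ => Real.exp (-r) * r ^ n / (n.factorial) * ((n : ℝ) - r) ^ 2) r := by
    convert (h2.add (h1.mul_left (1 - 2 * (r : ℝ)))).add (h0.mul_left ((r : ℝ) ^ 2)) using 1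
    · ext n; ring
    · ring
  rw [poissonMeasure, lintegral_sum_measure]
  simp only [lintegral_smul_measure, lintegral_dirac, smul_eq_mul]
  have h4 := ENNReal.ofReal_tsum_of_nonneg (fun n => by positivity) h3.summable
  rw [h3.tsum_eq] at h4
  rw [h4]
  refine le_of_eq (tsum_congr fun n => ?_)
  rw [ENNReal.ofReal_mul (by positivity)]

lemma gamma_second_moment (a : ℝ) (ha : 0 < a) :
    ∫⁻ x : ℝ, ENNReal.ofReal ((x - a) ^ 2) ∂(gammaMeasure a 1) ≤ ENNReal.ofReal a := by
  have i0 := Real.GammaIntegral_convergent ha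
  have i1 := Real.GammaIntegral_convergent (show 0 < a + 1 by linarith)
  have i2 := Real.GammaIntegral_convergent (show 0 < a + 1 + 1 by linarith)
  have e0 := Real.Gamma_eq_integral ha
  have e1 := Real.Gamma_eq_integral (show 0 < a + 1 by linarith)
  have e2 := Real.Gamma_eq_integral (show 0 < a + 1 + 1 by linarith)
  have hG : 0 < Real.Gamma a := Real.Gamma_pos_of_pos ha
  have g1 := Real.Gamma_add_one ha.ne'
  have g2 := Real.Gamma_add_one (show a + 1 ≠ 0 by linarith)
  have key : ∀ x ∈ Set.Ioi (0 : ℝ), gammaPDF a 1 x * ENNReal.ofReal ((x - a) ^ 2) =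
      ENNReal.ofReal ((Real.Gamma a)⁻¹ * (Real.exp (-x) * x ^ (a + 1 + 1 - 1)
        - (2 * a) * (Real.exp (-x) * x ^ (a + 1 - 1))
        + a ^ 2 * (Real.exp (-x) * x ^ (a - 1)))) := by
    intro x hx
    have hx' : 0 < x := hx
    rw [gammaPDF_of_nonneg hx'.le, ← ENNReal.ofReal_mul (by positivity)]
    congr 1
    have p1 : x ^ (a + 1 - 1) = x ^ (a - 1) * x := by
      rw [← Real.rpow_add_one hx'.ne']; congr 1; ring
    have p2 : x ^ (a + 1 + 1 - 1) = x ^ (a - 1) * x * x := by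
      rw [← Real.rpow_add_one hx'.ne', ← Real.rpow_add_one hx'.ne']; congr 1; ring
    rw [p1, p2, Real.one_rpow, one_mul]
    field_simp
    ring
  have hz : ∫⁻ x in (Set.Ioi (0 : ℝ))ᶜ, gammaPDF a 1 x * ENNReal.ofReal ((x - a) ^ 2) = 0 := by
    rw [Set.compl_Ioi, setLIntegral_congr Iio_ae_eq_Iic.symm,
      setLIntegral_congr_fun (g := fun _ => 0) measurableSet_Iio]
    · simp
    · intro x hx
      simp [gammaPDF_of_neg hx]
  have hmeas : Measurable (gammaPDF a 1) := (measurable_gammaPDFReal a 1).ennreal_ofReal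
  rw [gammaMeasure, lintegral_withDensity_eq_lintegral_mul _ hmeas (by fun_prop)]
  simp only [Pi.mul_apply]
  rw [← lintegral_add_compl _ (measurableSet_Ioi (a := (0 : ℝ))), hz, add_zero,
    setLIntegral_congr_fun measurableSet_Ioi key, ← ofReal_integral_eq_lintegral_ofReal]
  · apply ENNReal.ofReal_le_ofReal
    have j1 := i1.const_mul (2 * a)
    have j0 := i0.const_mul (a ^ 2)
    have j2 : IntegrableOn (fun x => Real.exp (-x) * x ^ (a + 1 + 1 - 1) -
      (2 * a) * (Real.exp (-x) * x ^ (a + 1 - 1))) (Set.Ioi 0) := i2.sub j1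
    rw [integral_const_mul, integral_add j2 j0, integral_sub i2 j1, integral_const_mul, integral_const_mul,
      ← e0, ← e1, ← e2, g2, g1]
    apply le_of_eq
    field_simp
    ring
  · exact ((i2.sub (i1.const_mul _)).add (i0.const_mul _)).const_mul _
  · refine (ae_restrict_iff' measurableSet_Ioi).2 (ae_of_all _ fun x hx => ?_)
    have hx' : 0 < x := hx
    have p1 : x ^ (a + 1 - 1) = x ^ (a - 1) * x := by
      rw [← Real.rpow_add_one hx'.ne']; congr 1; ring
    have p2 : x ^ (a + 1 + 1 - 1) = x ^ (a - 1) * x * x := by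
      rw [← Real.rpow_add_one hx'.ne', ← Real.rpow_add_one hx'.ne']; congr 1; ring
    have : (Real.Gamma a)⁻¹ * (Real.exp (-x) * x ^ (a + 1 + 1 - 1)
        - (2 * a) * (Real.exp (-x) * x ^ (a + 1 - 1))
        + a ^ 2 * (Real.exp (-x) * x ^ (a - 1))) =
        (Real.Gamma a)⁻¹ * (Real.exp (-x) * x ^ (a - 1) * (x - a) ^ 2) := by
      rw [p1, p2]; ring
    refine le_of_le_of_eq ?_ this.symm
    simp only [Pi.zero_apply]
    positivity

lemma pi_bound {V : ℕ} {F : Fin V → ℝ} (hFpos : ∀ j, 0 < F j) (hFsum : ∑ j, F j = 1)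
    {α : Type} [MeasurableSpace α] (m : Fin V → Measure α) [∀ j, IsProbabilityMeasure (m j)]
    (f : α → ℝ) (hf : Measurable f) {w δ : ℝ} (hw : 0 < w) (hδ : 0 < δ)
    (h : ∀ j, ∫⁻ x, ENNReal.ofReal ((f x - w * F j) ^ 2) ∂(m j) ≤ ENNReal.ofReal (w * F j)) :
    Measure.pi m {x | δ ≤ dist (fun j => f (x j) / w) F} ≤ ENNReal.ofReal (1 / (w * δ ^ 2)) := by
  have sub : {x : Fin V → α | δ ≤ dist (fun j => f (x j) / w) F} ⊆
      ⋃ j, Function.eval j ⁻¹' {y | ENNReal.ofReal ((w * δ) ^ 2) ≤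
        ENNReal.ofReal ((f y - w * F j) ^ 2)} := by
    intro x hx
    by_contra hcon
    simp only [Set.mem_iUnion, Set.mem_preimage, Set.mem_ofPred_eq, not_exists, not_le,
      Function.eval] at hcon hx
    refine absurd hx (not_le.2 ((dist_pi_lt_iff hδ).2 fun j => ?_))
    have h1 := (ENNReal.ofReal_lt_ofReal_iff (by positivity)).1 (hcon j)
    have h2 := abs_lt_of_sq_lt_sq h1 (by positivity)
    rw [Real.dist_eq]
    have : f (x j) / w - F j = (f (x j) - w * F j) / w := by field_simp
    rw [this, abs_div, abs_of_pos hw, div_lt_iff₀ hw]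
    rw [mul_comm δ w]; exact abs_lt.2 (abs_lt.1 h2)
  refine (measure_mono sub).trans ((measure_iUnion_fintype_le _ _).trans ?_)
  have each : ∀ j, Measure.pi m (Function.eval j ⁻¹' {y | ENNReal.ofReal ((w * δ) ^ 2) ≤
        ENNReal.ofReal ((f y - w * F j) ^ 2)}) ≤ ENNReal.ofReal (F j / (w * δ ^ 2)) := by
    intro j
    rw [(measurePreserving_eval m j).measure_preimage
      (measurableSet_le (by fun_prop) (by fun_prop)).nullMeasurableSet]
    refine (meas_ge_le_lintegral_div (by fun_prop) ?_ (by simp)).trans ?_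
    · exact (ENNReal.ofReal_pos.2 (by positivity)).ne'
    · refine (ENNReal.div_le_div_right (h j) _).trans ?_
      rw [← ENNReal.ofReal_div_of_pos (by positivity)]
      apply ENNReal.ofReal_le_ofReal (le_of_eq _)
      field_simp
  refine (Finset.sum_le_sum fun j _ => each j).trans ?_
  rw [← ENNReal.ofReal_sum_of_nonneg (fun j _ => by have := hFpos j; positivity),
    ← Finset.sum_div, hFsum]

lemma lp_le {V : ℕ} (F : Fin V → ℝ) (μ ν : Measure (Fin V → ℝ)) [IsProbabilityMeasure μ]
    [IsProbabilityMeasure ν] {ε : ℝ} (hε : 0 < ε)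
    (hμ : μ {x | ε ≤ dist x F} ≤ ENNReal.ofReal ε) (hν : ν {x | ε ≤ dist x F} ≤ ENNReal.ofReal ε) :
    levyProkhorovDist μ ν ≤ 2 * ε := by
  refine levyProkhorovDist_le_of_forall_le μ ν (by positivity) fun η B hη _ => ?_
  have hle : ENNReal.ofReal ε ≤ ENNReal.ofReal η := ENNReal.ofReal_le_ofReal (by linarith)
  by_cases hB : ∃ b ∈ B, dist b F < ε
  · obtain ⟨b, hb, hbF⟩ := hB
    have hs : (Set.univ : Set (Fin V → ℝ)) ⊆ Metric.thickening η B ∪ {x | ε ≤ dist x F} := by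
      intro x _
      by_cases hx : ε ≤ dist x F
      · exact Or.inr hx
      · left
        rw [Metric.mem_thickening_iff]
        refine ⟨b, hb, ?_⟩
        have := dist_triangle_right x b F
        push Not at hx
        linarith
    calc μ B ≤ 1 := prob_le_one
      _ = ν Set.univ := by simp
      _ ≤ _ := (measure_mono hs).trans ((measure_union_le _ _).trans (by gcongr; exact hν.trans hle))
  · push Not at hB
    exact (measure_mono fun x hx => hB x hx).trans ((hμ.trans hle).trans le_add_self)

lemma norm_close {V : ℕ} (F : Fin V → ℝ) (hFsum : ∑ j, F j = 1) {ε : ℝ} (hε : 0 < ε) :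
    ∃ δ > 0, ∀ x : Fin V → ℝ, dist x F < δ →
      dist (fun i => x i / ∑ j, x j) F < ε ∧ 0 < ∑ j, x j := by
  have hc : ContinuousAt (fun x : Fin V → ℝ => fun i => x i / ∑ j, x j) F := by
    refine continuousAt_pi.2 fun i => ContinuousAt.div (continuous_apply i).continuousAt (by fun_prop) (by simp [hFsum])
  have hc2 : ContinuousAt (fun x : Fin V → ℝ => ∑ j, x j) F := by fun_prop
  have e1 := Metric.tendsto_nhds.1 hc ε hε
  have e2 := hc2.eventually (lt_mem_nhds (show 0 < ∑ j, F j by simp [hFsum]))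
  obtain ⟨δ, hδ, h⟩ := Metric.eventually_nhds_iff.1 (e1.and e2)
  refine ⟨δ, hδ, fun x hx => ?_⟩
  have := h hx
  simpa [hFsum] using this

theorem ppu_levyProkhorov_tendsto_dirichlet
    (V : ℕ) (hV : 2 ≤ V) (F : Fin V → ℝ) (hFpos : ∀ j, 0 < F j) (hFsum : ∑ j, F j = 1) :
    Tendsto (fun ϖ : ℝ => levyProkhorovDist (ppu V ϖ F) (dirichletLaw V ϖ F))
      atTop (nhds 0) := by
  rw [Metric.tendsto_nhds]
  intro ε₀ hε₀
  obtain ⟨ε, hε, hεε⟩ : ∃ ε : ℝ, 0 < ε ∧ 2 * ε < ε₀ := ⟨ε₀ / 4, by positivity, by linarith⟩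
  obtain ⟨δ, hδ, hclose⟩ := norm_close F hFsum hε
  have hlim : Tendsto (fun w : ℝ => 1 / (w * δ ^ 2)) atTop (nhds 0) :=
    (tendsto_id.atTop_mul_const (by positivity)).const_div_atTop 1
  filter_upwards [eventually_gt_atTop 0,
    hlim.eventually (gt_mem_nhds (show 0 < ε / 2 by positivity)),
    hlim.eventually (gt_mem_nhds (show (0 : ℝ) < 1 / 2 by positivity))] with w hw hb hb2
  have hwF : ∀ j, 0 < w * F j := fun j => mul_pos hw (hFpos j)
  have hscale : ∀ x : Fin V → ℝ, (fun i => (x i / w) / ∑ j, x j / w) = fun i => x i / ∑ j, x j := by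
    intro x
    funext i
    rw [← Finset.sum_div, div_div_div_cancel_right₀ hw.ne']
  have : ∀ j, IsProbabilityMeasure (gammaMeasure (w * F j) 1) := fun j =>
    isProbabilityMeasure_gammaMeasure (hwF j) one_pos
  have hmD : Measurable (fun γ : Fin V → ℝ => fun i => γ i / ∑ j, γ j) := by fun_prop
  have hset : MeasurableSet {x : Fin V → ℝ | ε ≤ dist x F} :=
    measurableSet_le measurable_const (by fun_prop)
  have : IsProbabilityMeasure (dirichletLaw V w F) :=
    Measure.isProbabilityMeasure_map hmD.aemeasurable
  have hD : dirichletLaw V w F {x | ε ≤ dist x F} ≤ ENNReal.ofReal ε := by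
    rw [dirichletLaw, Measure.map_apply hmD hset]
    refine le_trans (measure_mono ?_) ((pi_bound hFpos hFsum (fun j => gammaMeasure (w * F j) 1)
      id measurable_id hw hδ (fun j => gamma_second_moment _ (hwF j))).trans
      (ENNReal.ofReal_le_ofReal (by linarith)))
    intro x hx
    by_contra hcon
    have := (hclose _ (not_le.1 hcon)).1
    simp only [id] at this
    rw [hscale] at this
    exact absurd hx (not_le.2 this)
  set P := Measure.pi fun j => poissonMeasure (w * F j).toNNReal with hP
  have hbadle := pi_bound hFpos hFsum (fun j => poissonMeasure (w * F j).toNNReal)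
      (fun n : ℕ => (n : ℝ)) (by fun_prop) hw hδ (fun j => by
        have := poisson_second_moment (w * F j).toNNReal
        rwa [Real.coe_toNNReal _ (hwF j).le] at this)
  set bad := {x : Fin V → ℕ | δ ≤ dist (fun j => (x j : ℝ) / w) F} with hbad
  have hgood : ∀ x ∉ bad, dist (fun i => (x i : ℝ) / ((∑ j, x j : ℕ) : ℝ)) F < ε ∧
      0 < ∑ j, x j := by
    intro x hx
    obtain ⟨h1, h2⟩ := hclose _ (not_le.1 hx)
    have h3 := hscale (fun i => (x i : ℝ))
    rw [h3] at h1
    refine ⟨by simpa using h1, ?_⟩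
    rw [← Finset.sum_div] at h2
    have h4 := (div_pos_iff_of_pos_right hw).1 h2
    exact_mod_cast h4
  have hpos : (2 : ENNReal)⁻¹ ≤ P {γ | 0 < ∑ j, γ j} := by
    have hs : (Set.univ : Set (Fin V → ℕ)) ⊆ {γ | 0 < ∑ j, γ j} ∪ bad := by
      intro x _
      by_cases hx : x ∈ bad
      · exact Or.inr hx
      · exact Or.inl (hgood x hx).2
    have h1 : (1 : ENNReal) ≤ P {γ | 0 < ∑ j, γ j} + 2⁻¹ := by
      calc (1 : ENNReal) = P Set.univ := by simp [hP]
        _ ≤ _ := (measure_mono hs).trans (measure_union_le _ _)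
        _ ≤ _ := by
          gcongr
          refine hbadle.trans ((ENNReal.ofReal_le_ofReal hb2.le).trans ?_)
          rw [one_div, ENNReal.ofReal_inv_of_pos (by norm_num)]
          simp
    rw [← ENNReal.inv_two_add_inv_two] at h1
    exact (ENNReal.add_le_add_iff_right (by simp)).1 h1
  have hne : P {γ | 0 < ∑ j, γ j} ≠ 0 := fun h => by simp [h] at hpos
  have : IsProbabilityMeasure (P[|{γ | 0 < ∑ j, γ j}]) := cond_isProbabilityMeasure hne
  have hmP : Measurable (fun γ : Fin V → ℕ => fun i => (γ i : ℝ) / ((∑ j, γ j : ℕ) : ℝ)) :=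
    measurable_of_countable _
  have : IsProbabilityMeasure (ppu V w F) :=
    Measure.isProbabilityMeasure_map hmP.aemeasurable
  have hPP : ppu V w F {x | ε ≤ dist x F} ≤ ENNReal.ofReal ε := by
    rw [ppu, Measure.map_apply hmP hset, cond_apply (Set.to_countable _).measurableSet]
    calc _ ≤ (2 : ENNReal) * P bad := by
          gcongr
          · exact ENNReal.inv_le_iff_inv_le.1 hpos
          · intro x hx
            by_contra hcon
            exact absurd hx.2 (not_le.2 (hgood x hcon).1)
      _ ≤ 2 * ENNReal.ofReal (ε / 2) := by
          gcongr
          exact hbadle.trans (ENNReal.ofReal_le_ofReal hb.le)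
      _ = ENNReal.ofReal ε := by
          rw [show (2 : ENNReal) = ENNReal.ofReal 2 by simp, ← ENNReal.ofReal_mul (by norm_num)]
          congr 1; ring
  have := lp_le F _ _ hε hPP hD
  rw [Real.dist_eq, sub_zero, abs_of_nonneg (show 0 ≤ levyProkhorovDist (ppu V w F) (dirichletLaw V w F) from
    ENNReal.toReal_nonneg)]
  linarith
end

section
/- Let F = (F_1, …, F_V) be a probability vector with F_j > 0 for all j, and for ϖ > 0 let x_ϖ = (x_1, …, x_V) be a PPU(ϖ, F) random vector. Then as ϖ → ∞: (i) E(x_i) → F_i for every i; (ii) ϖ · Var(x_i) → F_i(1 − F_i) for every i; and (iii) ϖ · Cov(x_i, x_j) → −F_i F_j for every i ≠ j. Equivalently, |E(x_i) − F_i| → 0, |Var(x_i) − F_i(1 − F_i)/ϖ| = o(1/ϖ), and |Cov(x_i, x_j) + F_i F_j/ϖ| = o(1/ϖ). -/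
open MeasureTheory ProbabilityTheory Filter Real

/-- The product of independent Poisson laws. -/
noncomputable def poiPi (V : ℕ) (ϖ : ℝ) (F : Fin V → ℝ) : Measure (Fin V → ℕ) :=
  Measure.pi fun j => poissonMeasure (ϖ * F j).toNNReal

instance (V : ℕ) (ϖ : ℝ) (F : Fin V → ℝ) : IsProbabilityMeasure (poiPi V ϖ F) := by
  unfold poiPi; infer_instance

lemma poisson_succ (r : NNReal) (n : ℕ) :
    ((n + 1 : ℕ) : ENNReal) * poissonMeasure r {n + 1} = r * poissonMeasure r {n} := by
  rw [poissonMeasure_singleton, poissonMeasure_singleton, ← ENNReal.ofReal_natCast,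
    ← ENNReal.ofReal_coe_nnreal, ← ENNReal.ofReal_mul (by positivity),
    ← ENNReal.ofReal_mul (by positivity)]
  congr 1
  rw [Nat.factorial_succ]
  push_cast
  field_simp
  ring

lemma mecke_measure (V : ℕ) (ϖ : ℝ) (F : Fin V → ℝ) (i : Fin V) :
    (poiPi V ϖ F).withDensity (fun γ => ((γ i : NNReal) : ENNReal))
      = (ϖ * F i).toNNReal • (poiPi V ϖ F).map (fun γ => γ + Pi.single i 1) := by
  refine Measure.ext_of_singleton fun γ => ?_
  rw [withDensity_apply _ (measurableSet_singleton _), lintegral_singleton, Measure.smul_apply,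
    Measure.map_apply .of_discrete (measurableSet_singleton _)]
  rcases Nat.eq_zero_or_pos (γ i) with h | h
  · have : (fun γ : Fin V → ℕ => γ + Pi.single i 1) ⁻¹' {γ} = ∅ := by
      ext δ
      simp only [Set.mem_preimage, Set.mem_singleton_iff, Set.mem_empty_iff_false, iff_false]
      intro e
      have := congrFun e i
      simp at this
      omega
    rw [this, h]
    simp
  · obtain ⟨δ, rfl⟩ : ∃ δ : Fin V → ℕ, γ = δ + Pi.single i 1 := by
      refine ⟨γ - Pi.single i 1, ?_⟩
      ext j
      by_cases hj : j = i
      · subst hj; simp; omega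
      · simp [hj]
    have : (fun γ : Fin V → ℕ => γ + Pi.single i 1) ⁻¹' {δ + Pi.single i 1} = {δ} := by
      ext ε; simp
    rw [this]
    unfold poiPi
    rw [Measure.pi_singleton, Measure.pi_singleton,
      ← Finset.mul_prod_erase _ _ (Finset.mem_univ i),
      ← Finset.mul_prod_erase Finset.univ (fun j => poissonMeasure (ϖ * F j).toNNReal {δ j})
        (Finset.mem_univ i)]
    have e : ∏ x ∈ Finset.univ.erase i,
        poissonMeasure (ϖ * F x).toNNReal {(δ + Pi.single i 1 : Fin V → ℕ) x}
        = ∏ x ∈ Finset.univ.erase i, poissonMeasure (ϖ * F x).toNNReal {δ x} := by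
      refine Finset.prod_congr rfl fun x hx => ?_
      have : x ≠ i := Finset.ne_of_mem_erase hx
      simp [this]
    rw [e, ENNReal.smul_def, smul_eq_mul, ← mul_assoc, ← mul_assoc, ← poisson_succ]
    simp

lemma mecke (V : ℕ) (ϖ : ℝ) (F : Fin V → ℝ) (i : Fin V) (h : 0 ≤ ϖ * F i)
    (g : (Fin V → ℕ) → ℝ) :
    ∫ γ, (γ i : ℝ) * g γ ∂(poiPi V ϖ F)
      = (ϖ * F i) * ∫ γ, g (γ + Pi.single i 1) ∂(poiPi V ϖ F) := by
  have h1 := integral_withDensity_eq_integral_smul (μ := poiPi V ϖ F)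
    (f := fun γ : Fin V → ℕ => (γ i : NNReal)) .of_discrete g
  rw [mecke_measure, integral_smul_nnreal_measure, integral_map .of_discrete .of_discrete] at h1
  simp only [NNReal.smul_def, smul_eq_mul, Real.coe_toNNReal _ h] at h1
  rw [h1]
  simp

lemma sum_add_single {V : ℕ} (γ : Fin V → ℕ) (i : Fin V) :
    ∑ j, (γ + Pi.single i 1 : Fin V → ℕ) j = (∑ j, γ j) + 1 := by
  simp [Finset.sum_add_distrib]

lemma integrable_bdd {α : Type*} [MeasurableSpace α] [DiscreteMeasurableSpace α] [Countable α]
    (μ : Measure α) [IsFiniteMeasure μ] (f : α → ℝ) (C : ℝ) (h : ∀ a, |f a| ≤ C) :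
    Integrable f μ :=
  Integrable.of_bound (Measurable.of_discrete.aestronglyMeasurable) C (.of_forall h)

/-- Law of the total. -/
noncomputable def tot (V : ℕ) (ϖ : ℝ) (F : Fin V → ℝ) : Measure ℕ :=
  (poiPi V ϖ F).map (fun γ => ∑ j, γ j)

instance (V : ℕ) (ϖ : ℝ) (F : Fin V → ℝ) : IsProbabilityMeasure (tot V ϖ F) :=
  Measure.isProbabilityMeasure_map .of_discrete

lemma integral_tot (V : ℕ) (ϖ : ℝ) (F : Fin V → ℝ) (h : ℕ → ℝ) :
    ∫ s, h s ∂(tot V ϖ F) = ∫ γ, h (∑ j, γ j) ∂(poiPi V ϖ F) :=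
  integral_map .of_discrete .of_discrete

lemma mecke1 (V : ℕ) (ϖ : ℝ) (F : Fin V → ℝ) (i : Fin V) (hp : 0 ≤ ϖ * F i) (h : ℕ → ℝ) :
    ∫ γ, (γ i : ℝ) * h (∑ j, γ j) ∂(poiPi V ϖ F) = ϖ * F i * ∫ s, h (s + 1) ∂(tot V ϖ F) := by
  rw [mecke V ϖ F i hp (fun γ => h (∑ j, γ j)), integral_tot V ϖ F (fun s => h (s + 1))]
  simp only [sum_add_single]

lemma coord_le {V : ℕ} (γ : Fin V → ℕ) (i : Fin V) : γ i ≤ ∑ j, γ j :=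
  Finset.single_le_sum (f := γ) (fun _ _ => Nat.zero_le _) (Finset.mem_univ i)

lemma coord_mul_le {V : ℕ} (γ : Fin V → ℕ) (i : Fin V) (h : ℕ → ℝ) (C : ℝ)
    (hC : ∀ s : ℕ, |(s : ℝ) * h s| ≤ C) : |(γ i : ℝ) * h (∑ j, γ j)| ≤ C := by
  refine le_trans ?_ (hC (∑ j, γ j))
  rw [abs_mul, abs_mul, Nat.abs_cast, Nat.abs_cast]
  gcongr
  exact coord_le γ i

lemma tot_rec (V : ℕ) (ϖ : ℝ) (F : Fin V → ℝ) (hϖ : 0 < ϖ) (hF : ∀ j, 0 < F j)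
    (hs : ∑ j, F j = 1) (h : ℕ → ℝ) (C : ℝ) (hC : ∀ s : ℕ, |(s : ℝ) * h s| ≤ C) :
    ∫ s, (s : ℝ) * h s ∂(tot V ϖ F) = ϖ * ∫ s, h (s + 1) ∂(tot V ϖ F) := by
  rw [integral_tot V ϖ F (fun s => (s : ℝ) * h s)]
  simp only [Nat.cast_sum, Finset.sum_mul]
  rw [integral_finsetSum]
  · simp_rw [mecke1 V ϖ F _ (mul_pos hϖ (hF _)).le h]
    rw [← Finset.sum_mul, ← Finset.mul_sum, hs, mul_one]
  · intro i _
    exact integrable_bdd _ _ C fun γ => coord_mul_le γ i h C hC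

lemma mecke2 (V : ℕ) (ϖ : ℝ) (F : Fin V → ℝ) (i j : Fin V) (hi : 0 ≤ ϖ * F i)
    (hj : 0 ≤ ϖ * F j) (h : ℕ → ℝ) (C : ℝ) (hC : ∀ s : ℕ, |(s : ℝ) * h (s + 1)| ≤ C)
    (D : ℝ) (hD : ∀ s : ℕ, |h (s + 1)| ≤ D) :
    ∫ γ, (γ i : ℝ) * ((γ j : ℝ) * h (∑ j, γ j)) ∂(poiPi V ϖ F)
      = ϖ * F i * (ϖ * F j * ∫ s, h (s + 2) ∂(tot V ϖ F)
        + (if i = j then 1 else 0) * ∫ s, h (s + 1) ∂(tot V ϖ F)) := by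
  rw [mecke V ϖ F i hi (fun γ => (γ j : ℝ) * h (∑ j, γ j))]
  simp only [sum_add_single]
  congr 1
  have e : ∀ γ : Fin V → ℕ, (((γ + Pi.single i 1 : Fin V → ℕ) j : ℕ) : ℝ) * h (∑ j, γ j + 1)
      = (γ j : ℝ) * h (∑ j, γ j + 1) + (if i = j then 1 else 0) * h (∑ j, γ j + 1) := by
    intro γ
    by_cases hij : i = j
    · subst hij; simp; ring
    · simp [hij, Ne.symm hij]
  simp_rw [e]
  rw [integral_add, integral_const_mul, mecke1 V ϖ F j hj (fun s => h (s + 1)),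
    integral_tot V ϖ F (fun s => h (s + 1))]
  · exact integrable_bdd _ _ C fun γ => coord_mul_le γ j (fun s => h (s + 1)) C hC
  · exact (integrable_bdd _ _ D fun γ => hD _).const_mul _

/-- Purely one-dimensional consequences of the recursion. -/
lemma nat_part (ρ : Measure ℕ) [IsProbabilityMeasure ρ] (ϖ : ℝ) (hϖ : 0 < ϖ)
    (hr : ∀ (h : ℕ → ℝ) (C : ℝ), (∀ s : ℕ, |(s : ℝ) * h s| ≤ C) →
      ∫ s, (s : ℝ) * h s ∂ρ = ϖ * ∫ s, h (s + 1) ∂ρ) :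
    (ϖ * ∫ s : ℕ, ((s : ℝ) + 1)⁻¹ ∂ρ = ρ.real {s | 0 < s}) ∧
    (ϖ ^ 2 * ∫ s : ℕ, (((s : ℝ) + 2) ^ 2)⁻¹ ∂ρ + ϖ * ∫ s : ℕ, (((s : ℝ) + 1) ^ 2)⁻¹ ∂ρ
      = ρ.real {s | 0 < s}) ∧
    1 - 1 / ϖ ≤ ρ.real {s | 0 < s} ∧
    1 - 3 / ϖ ≤ ϖ * (ϖ * ∫ s : ℕ, (((s : ℝ) + 1) ^ 2)⁻¹ ∂ρ) ∧
    ϖ * (ϖ * ∫ s : ℕ, (((s : ℝ) + 1) ^ 2)⁻¹ ∂ρ) ≤ 1 + 3 / ϖ := by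
  have hI : ∀ f : ℕ → ℝ, (∀ s, 0 ≤ f s) → (∀ s, f s ≤ 1) → Integrable f ρ := fun f h0 h1 =>
    integrable_bdd ρ f 1 fun s => by rw [abs_of_nonneg (h0 s)]; exact h1 s
  have le1 : ∀ f : ℕ → ℝ, (∀ s, 0 ≤ f s) → (∀ s, f s ≤ 1) → ∫ s, f s ∂ρ ≤ 1 := fun f h0 h1 => by
    have := integral_mono (hI f h0 h1) (integrable_const (1 : ℝ)) h1
    simpa using this
  have hP : ρ.real {s | 0 < s} = ∫ s : ℕ, (s : ℝ) * (s : ℝ)⁻¹ ∂ρ := by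
    rw [← integral_indicator_one (MeasurableSet.of_discrete)]
    congr 1
    ext s
    rcases Nat.eq_zero_or_pos s with h | h
    · simp [h]
    · have : (s : ℝ) ≠ 0 := by positivity
      simp [h, this]
  have r1 : ∫ s : ℕ, (s : ℝ) * (s : ℝ)⁻¹ ∂ρ = ϖ * ∫ s : ℕ, ((s : ℝ) + 1)⁻¹ ∂ρ := by
    rw [hr (fun s => (s : ℝ)⁻¹) 1]
    · simp
    · intro s
      rcases Nat.eq_zero_or_pos s with h | h
      · simp [h]
      · have : (s : ℝ) ≠ 0 := by positivity
        simp [this]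
  have r2 : ∫ s : ℕ, (s : ℝ) * (((s : ℝ) + 1) ^ 2)⁻¹ ∂ρ
      = ϖ * ∫ s : ℕ, (((s : ℝ) + 2) ^ 2)⁻¹ ∂ρ := by
    rw [hr (fun s => (((s : ℝ) + 1) ^ 2)⁻¹) 1]
    · congr 2; ext s; push_cast; ring
    · intro s
      rw [abs_of_nonneg (by positivity), ← div_eq_mul_inv, div_le_one (by positivity)]
      nlinarith [(Nat.cast_nonneg s : (0:ℝ) ≤ s)]
  have q1 : ∀ s : ℕ, (((s : ℝ) + 1) ^ 2)⁻¹ ≤ 1 := fun s => by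
    apply inv_le_one_of_one_le₀
    nlinarith [(Nat.cast_nonneg s : (0:ℝ) ≤ s)]
  have I1 : Integrable (fun s : ℕ => (((s : ℝ) + 1) ^ 2)⁻¹) ρ :=
    hI _ (fun s => by positivity) q1
  have r3 : ∫ s : ℕ, ((s : ℝ) + 1)⁻¹ ∂ρ
      = ∫ s : ℕ, (s : ℝ) * (((s : ℝ) + 1) ^ 2)⁻¹ ∂ρ + ∫ s : ℕ, (((s : ℝ) + 1) ^ 2)⁻¹ ∂ρ := by
    rw [← integral_add _ I1]
    · congr 1; ext s; field_simp
    · apply hI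
      · intro s; positivity
      · intro s
        rw [← div_eq_mul_inv, div_le_one (by positivity)]
        nlinarith [(Nat.cast_nonneg s : (0:ℝ) ≤ s)]
  -- indicator functions
  have ind0 : ∀ k s : ℕ, (0:ℝ) ≤ if s = k then 1 else 0 := fun k s => by split_ifs <;> norm_num
  have ind1 : ∀ k s : ℕ, (if s = k then (1:ℝ) else 0) ≤ 1 := fun k s => by split_ifs <;> norm_num
  have s0 : ∀ k : ℕ, ((k : ℝ) + 1) * ∫ s : ℕ, (if s = k + 1 then (1:ℝ) else 0) ∂ρ
      = ϖ * ∫ s : ℕ, (if s = k then (1:ℝ) else 0) ∂ρ := by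
    intro k
    have := hr (fun s => if s = k + 1 then (1:ℝ) else 0) (k + 1) (by
      intro s
      split_ifs with h
      · subst h; push_cast; rw [mul_one, abs_of_nonneg (by positivity)]
      · simp; positivity)
    simp only [add_left_inj] at this
    rw [← this, ← integral_const_mul]
    congr 1; ext s
    split_ifs with h
    · subst h; push_cast; ring
    · simp
  set p0 := ∫ s : ℕ, (if s = 0 then (1:ℝ) else 0) ∂ρ with hp0
  set p1 := ∫ s : ℕ, (if s = 1 then (1:ℝ) else 0) ∂ρ with hp1
  have b0 : p0 ≤ 1 / ϖ := by
    rw [le_div_iff₀ hϖ]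
    have h1 := s0 0
    have h2 := le1 (fun s => if s = 1 then (1:ℝ) else 0) (ind0 1) (ind1 1)
    simp only [zero_add, Nat.cast_zero, one_mul] at h1
    linarith
  have b1 : p1 ≤ 2 / ϖ := by
    rw [le_div_iff₀ hϖ]
    have h1 := s0 1
    have h2 := le1 (fun s => if s = 2 then (1:ℝ) else 0) (ind0 2) (ind1 2)
    norm_num at h1
    linarith
  have P0 : ∫ s : ℕ, (s : ℝ) * (s : ℝ)⁻¹ ∂ρ = 1 - p0 := by
    have : ∫ s : ℕ, (1:ℝ) - (if s = 0 then (1:ℝ) else 0) ∂ρ = 1 - p0 := by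
      rw [integral_sub (integrable_const _) (hI _ (ind0 0) (ind1 0))]; simp [hp0]
    rw [← this]
    congr 1; ext s
    rcases Nat.eq_zero_or_pos s with h | h
    · simp [h]
    · have h' : (s : ℝ) ≠ 0 := by positivity
      have : s ≠ 0 := by omega
      simp [h', this]
  -- falling factorial moments
  set M2 := ∫ s : ℕ, (((s : ℝ) + 1) * (s + 2))⁻¹ ∂ρ with hM2
  set M3 := ∫ s : ℕ, (((s : ℝ) + 1) * (s + 2) * (s + 3))⁻¹ ∂ρ with hM3
  have J2 : Integrable (fun s : ℕ => (((s : ℝ) + 1) * (s + 2))⁻¹) ρ := by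
    apply hI
    · intro s; positivity
    · intro s
      apply inv_le_one_of_one_le₀
      nlinarith [(Nat.cast_nonneg s : (0:ℝ) ≤ s)]
  have J3 : Integrable (fun s : ℕ => (((s : ℝ) + 1) * (s + 2) * (s + 3))⁻¹) ρ := by
    apply hI
    · intro s; positivity
    · intro s
      apply inv_le_one_of_one_le₀
      have : (0:ℝ) ≤ s := Nat.cast_nonneg s
      have : (1:ℝ) ≤ (s + 1) * (s + 2) := by nlinarith
      nlinarith
  have t1 : ∫ s : ℕ, (s : ℝ) * ((s : ℝ) * (s + 1))⁻¹ ∂ρ = ϖ * M2 := by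
    rw [hr (fun s => ((s : ℝ) * (s + 1))⁻¹) 1]
    · rw [hM2]; congr 2; ext s; push_cast; ring
    · intro s
      rw [abs_of_nonneg (by positivity), ← div_eq_mul_inv]
      apply div_le_one_of_le₀ _ (by positivity)
      nlinarith [(Nat.cast_nonneg s : (0:ℝ) ≤ s)]
  have t2 : ∫ s : ℕ, (s : ℝ) * (if 2 ≤ s then (s : ℝ)⁻¹ else 0) ∂ρ
      = ϖ * ∫ s : ℕ, (s : ℝ) * ((s : ℝ) * (s + 1))⁻¹ ∂ρ := by
    rw [hr (fun s => if 2 ≤ s then (s : ℝ)⁻¹ else 0) 1]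
    · congr 2; ext s
      rcases Nat.eq_zero_or_pos s with h | h
      · simp [h]
      · have : 2 ≤ s + 1 := by omega
        rw [if_pos this]; push_cast; field_simp
    · intro s
      split_ifs with h
      · have : (s : ℝ) ≠ 0 := by positivity
        simp [this]
      · simp
  have t3 : ∫ s : ℕ, (s : ℝ) * (if 2 ≤ s then (s : ℝ)⁻¹ else 0) ∂ρ = 1 - p0 - p1 := by
    have : ∫ s : ℕ, (1:ℝ) - (if s = 0 then (1:ℝ) else 0) - (if s = 1 then (1:ℝ) else 0) ∂ρ
        = 1 - p0 - p1 := by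
      have k : Integrable (fun s : ℕ => (1:ℝ) - (if s = 0 then (1:ℝ) else 0)) ρ :=
        (integrable_const _).sub (hI _ (ind0 0) (ind1 0))
      rw [integral_sub k (hI _ (ind0 1) (ind1 1)),
        integral_sub (integrable_const _) (hI _ (ind0 0) (ind1 0))]; simp [hp0, hp1]
    rw [← this]
    congr 1; ext s
    rcases s with _ | _ | s
    · simp
    · simp
    · have : ((s + 1 + 1 : ℕ) : ℝ) ≠ 0 := by positivity
      rw [if_pos (by omega), if_neg (by omega), if_neg (by omega), mul_inv_cancel₀ this]; ring
  have t4 : ϖ * M3 ≤ M2 := by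
    have : ∫ s : ℕ, (s : ℝ) * ((s : ℝ) * (s + 1) * (s + 2))⁻¹ ∂ρ = ϖ * M3 := by
      rw [hr (fun s => ((s : ℝ) * (s + 1) * (s + 2))⁻¹) 1]
      · rw [hM3]; congr 2; ext s; push_cast; ring
      · intro s
        rw [abs_of_nonneg (by positivity), ← div_eq_mul_inv]
        apply div_le_one_of_le₀ _ (by positivity)
        have : (0:ℝ) ≤ s := Nat.cast_nonneg s
        have : (1:ℝ) ≤ (s + 1) * (s + 2) := by nlinarith
        nlinarith
    rw [← this, hM2]
    apply integral_mono_of_nonneg _ J2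
    · refine .of_forall fun s => ?_
      rcases Nat.eq_zero_or_pos s with h | h
      · simp [h]
      · have : (s : ℝ) ≠ 0 := by positivity
        apply le_of_eq
        field_simp
    · exact .of_forall fun s => by simp only [Pi.zero_apply]; positivity
  have p0n : 0 ≤ p0 := integral_nonneg (ind0 0)
  have p1n : 0 ≤ p1 := integral_nonneg (ind0 1)
  have M2e : ϖ * (ϖ * M2) = 1 - p0 - p1 := by rw [← t1, ← t2, t3]
  have lo : M2 ≤ ∫ s : ℕ, (((s : ℝ) + 1) ^ 2)⁻¹ ∂ρ := by
    apply integral_mono J2 I1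
    intro s
    apply inv_anti₀ (by positivity)
    nlinarith [(Nat.cast_nonneg s : (0:ℝ) ≤ s)]
  have up : ∫ s : ℕ, (((s : ℝ) + 1) ^ 2)⁻¹ ∂ρ ≤ M2 + 3 * M3 := by
    rw [hM3, ← integral_const_mul, hM2, ← integral_add J2 (J3.const_mul 3)]
    apply integral_mono I1 (J2.add (J3.const_mul 3))
    intro s
    have h0 : (0:ℝ) ≤ s := Nat.cast_nonneg s
    have : (((s : ℝ) + 1) * (s + 2))⁻¹ + 3 * (((s : ℝ) + 1) * (s + 2) * (s + 3))⁻¹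
        = (s + 6) / (((s : ℝ) + 1) * (s + 2) * (s + 3)) := by field_simp; ring
    simp only [Pi.add_apply, this]
    rw [inv_eq_one_div, div_le_div_iff₀ (by positivity) (by positivity)]
    have : 0 ≤ (s : ℝ) * (s + 1) := by positivity
    nlinarith
  refine ⟨by rw [hP, r1], ?_, ?_, ?_, ?_⟩
  · rw [hP, r1, r3, r2]; ring
  · rw [hP, P0]; linarith
  · have : ϖ * (ϖ * M2) ≤ ϖ * (ϖ * ∫ s : ℕ, (((s : ℝ) + 1) ^ 2)⁻¹ ∂ρ) := by gcongr
    have e : 3 / ϖ = 1 / ϖ + 2 / ϖ := by ring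
    linarith
  · have h1 : ϖ * (ϖ * ∫ s : ℕ, (((s : ℝ) + 1) ^ 2)⁻¹ ∂ρ) ≤ ϖ * (ϖ * (M2 + 3 * M3)) := by gcongr
    have h2 : ϖ * (ϖ * (ϖ * M3)) ≤ ϖ * (ϖ * M2) := by gcongr
    have h3 : ϖ * (ϖ * M3) ≤ 1 / ϖ := by
      rw [le_div_iff₀ hϖ]; nlinarith
    have e : 3 / ϖ = 3 * (1 / ϖ) := by ring
    nlinarith

/-- The normalizing map. -/
noncomputable def nrm {V : ℕ} (γ : Fin V → ℕ) (i : Fin V) : ℝ :=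
  (γ i : ℝ) / ((∑ j, γ j : ℕ) : ℝ)

lemma tot_pos_real (V : ℕ) (ϖ : ℝ) (F : Fin V → ℝ) :
    (tot V ϖ F).real {s | 0 < s} = (poiPi V ϖ F).real {γ | 0 < ∑ j, γ j} := by
  unfold tot
  rw [map_measureReal_apply .of_discrete .of_discrete]
  rfl

lemma integral_ppu (V : ℕ) (ϖ : ℝ) (F : Fin V → ℝ) (f : (Fin V → ℝ) → ℝ) (hf : Measurable f)
    (h0 : f 0 = 0) :
    ∫ x, f x ∂(ppu V ϖ F)
      = ((tot V ϖ F).real {s | 0 < s})⁻¹ * ∫ γ, f (nrm γ) ∂(poiPi V ϖ F) := by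
  unfold ppu
  rw [integral_map .of_discrete hf.aestronglyMeasurable, ProbabilityTheory.cond,
    integral_smul_measure, tot_pos_real, smul_eq_mul, ENNReal.toReal_inv]
  congr 1
  change ∫ γ in _, f (nrm γ) ∂(poiPi V ϖ F) = _
  apply setIntegral_eq_integral_of_forall_compl_eq_zero
  intro γ hγ
  have : ∑ j, γ j = 0 := by simpa using hγ
  have e : nrm γ = 0 := by
    ext i; simp only [nrm, this]; simp
  rw [e, h0]

lemma nrm_nonneg {V : ℕ} (γ : Fin V → ℕ) (i : Fin V) : 0 ≤ nrm γ i := by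
  unfold nrm; positivity

lemma nrm_le_one {V : ℕ} (γ : Fin V → ℕ) (i : Fin V) : nrm γ i ≤ 1 := by
  unfold nrm
  apply div_le_one_of_le₀ _ (by positivity)
  exact_mod_cast coord_le γ i

lemma moments (V : ℕ) (F : Fin V → ℝ) (hFpos : ∀ j, 0 < F j) (hFsum : ∑ j, F j = 1)
    (ϖ : ℝ) (hϖ : 1 < ϖ) :
    (∀ i, ∫ x, x i ∂(ppu V ϖ F) = F i) ∧
    (∀ i j, ϖ * ∫ x, (x i - F i) * (x j - F j) ∂(ppu V ϖ F)
      = F i * ((if i = j then 1 else 0) - F j) *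
        ((ϖ * (ϖ * ∫ s : ℕ, (((s : ℝ) + 1) ^ 2)⁻¹ ∂(tot V ϖ F)))
          / (tot V ϖ F).real {s | 0 < s})) := by
  have hϖ0 : 0 < ϖ := by linarith
  obtain ⟨e1, e2, e3, -, -⟩ := nat_part (tot V ϖ F) ϖ hϖ0
    (fun h C hC => tot_rec V ϖ F hϖ0 hFpos hFsum h C hC)
  set P := (tot V ϖ F).real {s | 0 < s} with hP
  have Ppos : 0 < P := by
    have : 1 / ϖ < 1 := by rw [div_lt_one hϖ0]; exact hϖ
    linarith
  have E1 : ∀ i, ∫ x, x i ∂(ppu V ϖ F) = F i := by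
    intro i
    rw [integral_ppu V ϖ F (fun x => x i) (by fun_prop) (by simp)]
    simp only [nrm, div_eq_mul_inv]
    rw [mecke1 V ϖ F i (mul_pos hϖ0 (hFpos i)).le (fun s => (s : ℝ)⁻¹)]
    push_cast
    rw [← hP, mul_right_comm, e1]
    field_simp
  have E2 : ∀ i j, ∫ x, x i * x j ∂(ppu V ϖ F) = P⁻¹ *
      (ϖ * F i * (ϖ * F j * ∫ s : ℕ, (((s : ℝ) + 2) ^ 2)⁻¹ ∂(tot V ϖ F)
        + (if i = j then 1 else 0) * ∫ s : ℕ, (((s : ℝ) + 1) ^ 2)⁻¹ ∂(tot V ϖ F))) := by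
    intro i j
    rw [integral_ppu V ϖ F (fun x => x i * x j) (by fun_prop) (by simp)]
    have := mecke2 V ϖ F i j (mul_pos hϖ0 (hFpos i)).le (mul_pos hϖ0 (hFpos j)).le
      (fun s => ((s : ℝ) ^ 2)⁻¹) 1 (by
        intro s
        rw [abs_of_nonneg (by positivity), ← div_eq_mul_inv, div_le_one (by positivity)]
        push_cast
        nlinarith [(Nat.cast_nonneg s : (0:ℝ) ≤ s)]) 1 (by
        intro s
        rw [abs_of_nonneg (by positivity)]
        apply inv_le_one_of_one_le₀
        push_cast
        nlinarith [(Nat.cast_nonneg s : (0:ℝ) ≤ s)])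
    push_cast at this
    rw [← this]
    congr 2; ext γ
    simp only [nrm, div_eq_mul_inv]
    push_cast
    rw [← inv_pow]; ring
  have hprob : IsProbabilityMeasure (ppu V ϖ F) := by
    unfold ppu
    have : IsProbabilityMeasure ((Measure.pi fun j => poissonMeasure (ϖ * F j).toNNReal)[|{γ : Fin V → ℕ | 0 < ∑ j, γ j}]) := by
      apply cond_isProbabilityMeasure
      intro h
      have : P = 0 := by
        rw [hP, tot_pos_real, measureReal_def]
        unfold poiPi
        rw [h]; simp
      linarith
    exact Measure.isProbabilityMeasure_map .of_discrete
  have bd : ∀ f : (Fin V → ℝ) → ℝ, Measurable f → (∀ γ, |f (nrm γ)| ≤ 1) →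
      Integrable f (ppu V ϖ F) := by
    intro f hf hb
    unfold ppu
    rw [integrable_map_measure hf.aestronglyMeasurable .of_discrete]
    exact integrable_bdd _ _ 1 hb
  have i1 : ∀ i, Integrable (fun x : Fin V → ℝ => x i) (ppu V ϖ F) := fun i =>
    bd _ (by fun_prop) fun γ => by
      rw [abs_of_nonneg (nrm_nonneg γ i)]; exact nrm_le_one γ i
  have i2 : ∀ i j, Integrable (fun x : Fin V → ℝ => x i * x j) (ppu V ϖ F) := fun i j =>
    bd _ (by fun_prop) fun γ => by
      rw [abs_of_nonneg (mul_nonneg (nrm_nonneg γ i) (nrm_nonneg γ j))]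
      exact mul_le_one₀ (nrm_le_one γ i) (nrm_nonneg γ j) (nrm_le_one γ j)
  refine ⟨E1, fun i j => ?_⟩
  have ex : ∫ x, (x i - F i) * (x j - F j) ∂(ppu V ϖ F)
      = ∫ x, x i * x j ∂(ppu V ϖ F) - F i * F j := by
    have : ∀ x : Fin V → ℝ, (x i - F i) * (x j - F j)
        = x i * x j - F j * x i - F i * x j + F i * F j := fun x => by ring
    simp_rw [this]
    have k1 : Integrable (fun x : Fin V → ℝ => x i * x j - F j * x i) (ppu V ϖ F) :=
      (i2 i j).sub ((i1 i).const_mul _)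
    have k2 : Integrable (fun x : Fin V → ℝ => x i * x j - F j * x i - F i * x j) (ppu V ϖ F) :=
      k1.sub ((i1 j).const_mul _)
    rw [integral_add k2 (integrable_const _), integral_sub k1 ((i1 j).const_mul _),
      integral_sub (i2 i j) ((i1 i).const_mul _), integral_const_mul, integral_const_mul, E1, E1]
    simp
    ring
  rw [ex, E2]
  set A := ∫ s : ℕ, (((s : ℝ) + 2) ^ 2)⁻¹ ∂(tot V ϖ F)
  set B := ∫ s : ℕ, (((s : ℝ) + 1) ^ 2)⁻¹ ∂(tot V ϖ F)
  have hA : ϖ ^ 2 * A = P - ϖ * B := by linarith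
  field_simp
  rw [mul_add]
  linear_combination (F i * F j) * hA

lemma ratio_tendsto (V : ℕ) (F : Fin V → ℝ) (hFpos : ∀ j, 0 < F j) (hFsum : ∑ j, F j = 1) :
    Tendsto (fun ϖ : ℝ => (ϖ * (ϖ * ∫ s : ℕ, (((s : ℝ) + 1) ^ 2)⁻¹ ∂(tot V ϖ F)))
          / (tot V ϖ F).real {s | 0 < s}) atTop (nhds 1) := by
  have H : ∀ ϖ : ℝ, 0 < ϖ → _ := fun ϖ hϖ => nat_part (tot V ϖ F) ϖ hϖ
    (fun h C hC => tot_rec V ϖ F hϖ hFpos hFsum h C hC)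
  have z : ∀ c : ℝ, Tendsto (fun ϖ : ℝ => c / ϖ) atTop (nhds 0) := fun c =>
    tendsto_const_nhds.div_atTop tendsto_id
  have T1 : Tendsto (fun ϖ : ℝ => ϖ * (ϖ * ∫ s : ℕ, (((s : ℝ) + 1) ^ 2)⁻¹ ∂(tot V ϖ F)))
      atTop (nhds 1) := by
    refine tendsto_of_tendsto_of_tendsto_of_le_of_le' (g := fun ϖ => 1 - 3 / ϖ)
      (h := fun ϖ => 1 + 3 / ϖ) ?_ ?_ ?_ ?_
    · simpa using (z 3).const_sub 1
    · simpa using (z 3).const_add 1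
    · filter_upwards [eventually_gt_atTop 0] with ϖ hϖ using (H ϖ hϖ).2.2.2.1
    · filter_upwards [eventually_gt_atTop 0] with ϖ hϖ using (H ϖ hϖ).2.2.2.2
  have T2 : Tendsto (fun ϖ : ℝ => (tot V ϖ F).real {s | 0 < s}) atTop (nhds 1) := by
    refine tendsto_of_tendsto_of_tendsto_of_le_of_le' (g := fun ϖ => 1 - 1 / ϖ)
      (h := fun _ => 1) ?_ tendsto_const_nhds ?_ (.of_forall fun ϖ => measureReal_le_one)
    · simpa using (z 1).const_sub 1
    · filter_upwards [eventually_gt_atTop 0] with ϖ hϖ using (H ϖ hϖ).2.2.1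
  have T3 := T1.div T2 one_ne_zero
  rw [div_one] at T3
  exact T3

/-- **Asymptotic moments of the Poisson Pólya urn.** If `x_ϖ ~ PPU(ϖ, F)` with `F` a strictly
positive probability vector, then as `ϖ → ∞`:
(i) `E(x_i) → F_i`; (ii) `ϖ · Var(x_i) → F_i (1 − F_i)`; (iii) `ϖ · Cov(x_i, x_j) → −F_i F_j`
for `i ≠ j`. -/
theorem ppu_asymptotic_moments
    (V : ℕ) (hV : 1 ≤ V) (F : Fin V → ℝ) (hFpos : ∀ j, 0 < F j) (hFsum : ∑ j, F j = 1) :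
    (∀ i, Tendsto (fun ϖ : ℝ => ∫ x, x i ∂(ppu V ϖ F)) atTop (nhds (F i)))
    ∧
    (∀ i, Tendsto
      (fun ϖ : ℝ => ϖ * ∫ x, (x i - ∫ y, y i ∂(ppu V ϖ F)) ^ 2 ∂(ppu V ϖ F))
      atTop (nhds (F i * (1 - F i))))
    ∧
    (∀ i j, i ≠ j → Tendsto
      (fun ϖ : ℝ =>
        ϖ * ∫ x, (x i - ∫ y, y i ∂(ppu V ϖ F)) * (x j - ∫ y, y j ∂(ppu V ϖ F)) ∂(ppu V ϖ F))
      atTop (nhds (-(F i * F j)))) := by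
  have M := moments V F hFpos hFsum
  have R := ratio_tendsto V F hFpos hFsum
  have key : ∀ i j, Tendsto
      (fun ϖ : ℝ =>
        ϖ * ∫ x, (x i - ∫ y, y i ∂(ppu V ϖ F)) * (x j - ∫ y, y j ∂(ppu V ϖ F)) ∂(ppu V ϖ F))
      atTop (nhds (F i * ((if i = j then 1 else 0) - F j))) := by
    intro i j
    have T := R.const_mul (F i * ((if i = j then 1 else 0) - F j))
    rw [mul_one] at T
    refine T.congr' ?_
    filter_upwards [eventually_gt_atTop 1] with ϖ hϖ
    rw [(M ϖ hϖ).1 i, (M ϖ hϖ).1 j, (M ϖ hϖ).2 i j]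
  refine ⟨fun i => ?_, fun i => ?_, fun i j hij => ?_⟩
  · refine tendsto_const_nhds.congr' ?_
    filter_upwards [eventually_gt_atTop 1] with ϖ hϖ
    rw [(M ϖ hϖ).1 i]
  · simpa [sq] using key i i
  · simpa [hij] using key i j
end
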